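/- arXiv:1711.01827 — 2 statements merged into one kernel-verified Lean document; each statement's English description precedes it below -/
import Mathlib

section
/- Let K = (k_1,…,k_r) be any finite sequence of positive integers. Then ρ̄( Σ_{Π ∈ P(r)} c̄(Π) · H(K;Π;T) ) = Σ_{Π ∈ P(r)} c̄(Π) · H*(K;Π;T) in ℝ[T]. -/
open Finset

open scoped Classical

/-- The Riemann zeta value `ζ(m) = Σ_{n ≥ 1} 1/n^m`. -/
noncomputable def zetaVal (m : ℕ) : ℝ := ∑' n : ℕ, 1 / ((n : ℝ) + 1) ^ m

/-- `E(k;T) ∈ ℝ[T]`: the constant polynomial `ζ(k)` if `k ≥ 2`, the variable `T` if `k = 1`. -/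
noncomputable def Epoly (k : ℕ) : Polynomial ℝ :=
  if k = 1 then Polynomial.X else Polynomial.C (zetaVal k)

/-- The set of partitions of a finite set `S`: sets of nonempty pairwise disjoint
subsets (blocks) of `S` whose union is `S`. -/
noncomputable def partitionsOf {α : Type*} [DecidableEq α] (S : Finset α) :
    Finset (Finset (Finset α)) :=
  S.powerset.powerset.filter (fun π =>
    (∀ P ∈ π, P.Nonempty) ∧
    (∀ P ∈ π, ∀ Q ∈ π, P ≠ Q → Disjoint P Q) ∧
    π.biUnion id = S)

/-- `c̄(Π) = ∏_{P ∈ Π} (|P| - 1)!`. -/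
def cbar {α : Type*} (π : Finset (Finset α)) : ℕ :=
  ∏ P ∈ π, (P.card - 1).factorial

/-- The harmonic-type polynomial `H(K;Π;T) = ∏_{P ∈ Π} E(Σ_{p ∈ P} k_p; T)`. -/
noncomputable def Hpoly {r : ℕ} (k : Fin r → ℕ) (π : Finset (Finset (Fin r))) :
    Polynomial ℝ :=
  ∏ P ∈ π, Epoly (∑ p ∈ P, k p)

/-- The shuffle-type polynomial `H*(K;Π;T) = ∏_{P ∈ Π} χ_K(P) · E(Σ_{p ∈ P} k_p; T)`,
where `χ_K(P) = 0` if `|P| > 1` and `k_p = 1` for all `p ∈ P`, and `χ_K(P) = 1` otherwise. -/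
noncomputable def Hstar {r : ℕ} (k : Fin r → ℕ) (π : Finset (Finset (Fin r))) :
    Polynomial ℝ :=
  ∏ P ∈ π,
    (if 1 < P.card ∧ ∀ p ∈ P, k p = 1 then 0 else 1) * Epoly (∑ p ∈ P, k p)

/-- `ρ̄(T^s) = s! Σ (∏_{m=2}^s (−ζ(m)/m)^{i_m}/i_m!) T^j/j!`, the sum over tuples
`(j, i_2, …, i_s)` of nonnegative integers with `j + Σ_{m=2}^s m·i_m = s`.
Tuples are encoded as pairs `(j, i)` with `i : Fin (s+1) → ℕ` supported on indices
`m ≥ 2` (the values `i 0`, `i 1` are forced to be `0`); the bound `i m ≤ s` is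
automatic, so ranging over `{0,…,s}` captures all tuples. -/
noncomputable def rhoX (s : ℕ) : Polynomial ℝ :=
  (s.factorial : Polynomial ℝ) *
    ∑ j ∈ Finset.range (s + 1),
      ∑ i ∈ (Fintype.piFinset fun _ : Fin (s + 1) => Finset.range (s + 1)).filter
          (fun i => (∀ m : Fin (s + 1), m.1 < 2 → i m = 0) ∧
            j + ∑ m : Fin (s + 1), m.1 * i m = s),
        (∏ m : Fin (s + 1),
            Polynomial.C ((-(zetaVal m.1) / (m.1 : ℝ)) ^ i m / ((i m).factorial : ℝ))) *
          (Polynomial.X ^ j * Polynomial.C ((j.factorial : ℝ)⁻¹))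

/-- The `ℝ`-linear endomorphism `ρ̄` of `ℝ[T]`, defined on monomials by `T^s ↦ ρ̄(T^s)`
and extended by linearity. -/
noncomputable def rho (p : Polynomial ℝ) : Polynomial ℝ :=
  ∑ s ∈ p.support, Polynomial.C (p.coeff s) * rhoX s

section aux
variable {α : Type*} [DecidableEq α] {R : Type*} [CommRing R]

theorem mem_partitionsOf {S : Finset α} {π : Finset (Finset α)} :
    π ∈ partitionsOf S ↔ (∀ P ∈ π, P.Nonempty) ∧
    (∀ P ∈ π, ∀ Q ∈ π, P ≠ Q → Disjoint P Q) ∧ π.biUnion id = S := by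
  unfold partitionsOf
  simp only [mem_filter, mem_powerset]
  constructor
  · exact fun h => h.2
  · intro h
    refine ⟨?_, h⟩
    intro P hP
    rw [mem_powerset, ← h.2.2]
    exact Finset.subset_biUnion_of_mem id hP

/-- weighted partition sum -/
noncomputable def Wsum (f : Finset α → R) (S : Finset α) : R :=
  ∑ π ∈ partitionsOf S, ∏ P ∈ π, f P

theorem block_subset {S : Finset α} {π : Finset (Finset α)} (h : π ∈ partitionsOf S)
    {P : Finset α} (hP : P ∈ π) : P ⊆ S := by
  rw [mem_partitionsOf] at h
  rw [← h.2.2]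
  exact Finset.subset_biUnion_of_mem id hP

theorem Wsum_congr {f g : Finset α → R} {S : Finset α}
    (h : ∀ P, P.Nonempty → P ⊆ S → f P = g P) : Wsum f S = Wsum g S := by
  refine Finset.sum_congr rfl fun π hπ => Finset.prod_congr rfl fun P hP => ?_
  exact h P ((mem_partitionsOf.1 hπ).1 P hP) (block_subset hπ hP)

theorem Wsum_eq_zero {f : Finset α → R} {S : Finset α} {a : α} (ha : a ∈ S)
    (h : ∀ P, a ∈ P → f P = 0) : Wsum f S = 0 := by
  refine Finset.sum_eq_zero fun π hπ => ?_
  have h3 := (mem_partitionsOf.1 hπ).2.2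
  rw [← h3, mem_biUnion] at ha
  obtain ⟨P, hP, haP⟩ := ha
  exact Finset.prod_eq_zero hP (h P haP)

theorem partitionsOf_empty : partitionsOf (∅ : Finset α) = {∅} := by
  ext π
  rw [mem_partitionsOf, mem_singleton]
  constructor
  · rintro ⟨h1, -, h3⟩
    rw [Finset.eq_empty_iff_forall_notMem]
    intro P hP
    obtain ⟨x, hx⟩ := h1 P hP
    have : x ∈ π.biUnion id := mem_biUnion.2 ⟨P, hP, hx⟩
    rw [h3] at this
    simp at this
  · rintro rfl
    simp

theorem Wsum_empty (f : Finset α → R) : Wsum f ∅ = 1 := by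
  simp [Wsum, partitionsOf_empty]

theorem Wsum_add (f g : Finset α → R) (S : Finset α) :
    Wsum (fun P => f P + g P) S = ∑ U ∈ S.powerset, Wsum f U * Wsum g (S \ U) := by
  unfold Wsum
  simp only [Finset.prod_add, Finset.sum_mul_sum, ← Finset.sum_product']
  rw [Finset.sum_sigma', Finset.sum_sigma']
  refine Finset.sum_bij' (fun x _ => ⟨x.2.biUnion id, (x.2, x.1 \ x.2)⟩)
    (fun y _ => ⟨y.2.1 ∪ y.2.2, y.2.1⟩) ?_ ?_ ?_ ?_ ?_
  · rintro ⟨π, σ⟩ h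
    simp only [mem_sigma, mem_powerset, mem_product, mem_partitionsOf] at h ⊢
    obtain ⟨⟨h1, h2, h3⟩, hσ⟩ := h
    refine ⟨?_, ⟨fun P hP => h1 P (hσ hP), fun P hP Q hQ => h2 P (hσ hP) Q (hσ hQ), trivial⟩,
      fun P hP => h1 P (mem_sdiff.1 hP).1,
      fun P hP Q hQ => h2 P (mem_sdiff.1 hP).1 Q (mem_sdiff.1 hQ).1, ?_⟩
    · rw [← h3]; exact Finset.biUnion_subset_biUnion_of_subset_left _ hσ
    · ext x
      simp only [mem_biUnion, mem_sdiff, id, ← h3]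
      constructor
      · rintro ⟨P, ⟨hP, hPσ⟩, hx⟩
        refine ⟨⟨P, hP, hx⟩, ?_⟩
        rintro ⟨Q, hQ, hxQ⟩
        have hne : P ≠ Q := fun h => hPσ (h ▸ hQ)
        exact Finset.disjoint_left.1 (h2 P hP Q (hσ hQ) hne) hx hxQ
      · rintro ⟨⟨P, hP, hx⟩, hn⟩
        exact ⟨P, ⟨hP, fun h => hn ⟨P, h, hx⟩⟩, hx⟩
  · rintro ⟨U, π, σ⟩ h
    simp only [mem_sigma, mem_powerset, mem_product, mem_partitionsOf] at h ⊢
    obtain ⟨hU, ⟨h1, h2, h3⟩, k1, k2, k3⟩ := h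
    have hd : ∀ P ∈ π, ∀ Q ∈ σ, Disjoint P Q := by
      intro P hP Q hQ
      have hP' : P ⊆ U := by rw [← h3]; exact Finset.subset_biUnion_of_mem id hP
      have hQ' : Q ⊆ S \ U := by rw [← k3]; exact Finset.subset_biUnion_of_mem id hQ
      exact Finset.disjoint_of_subset_left hP'
        (Finset.disjoint_of_subset_right hQ' Finset.disjoint_sdiff)
    refine ⟨⟨?_, ?_, ?_⟩, Finset.subset_union_left⟩
    · intro P hP
      rcases mem_union.1 hP with h | h
      exacts [h1 P h, k1 P h]
    · intro P hP Q hQ hne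
      rcases mem_union.1 hP with h | h <;> rcases mem_union.1 hQ with h' | h'
      exacts [h2 P h Q h' hne, hd P h Q h', (hd Q h' P h).symm, k2 P h Q h' hne]
    · rw [Finset.union_biUnion, h3, k3]
      exact Finset.union_sdiff_of_subset hU
  · rintro ⟨π, σ⟩ h
    simp only [mem_sigma, mem_powerset] at h
    simp [Finset.union_sdiff_of_subset h.2]
  · rintro ⟨U, π, σ⟩ h
    simp only [mem_sigma, mem_powerset, mem_product, mem_partitionsOf] at h
    obtain ⟨hU, ⟨h1, h2, h3⟩, k1, k2, k3⟩ := h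
    have hd : Disjoint π σ := by
      rw [Finset.disjoint_left]
      intro P hP hQ
      have hP' : P ⊆ U := by rw [← h3]; exact Finset.subset_biUnion_of_mem id hP
      have hQ' : P ⊆ S \ U := by rw [← k3]; exact Finset.subset_biUnion_of_mem id hQ
      obtain ⟨x, hx⟩ := h1 P hP
      exact (mem_sdiff.1 (hQ' hx)).2 (hP' hx)
    have : (π ∪ σ) \ π = σ := by
      rw [Finset.union_sdiff_left, Finset.sdiff_eq_self_of_disjoint hd.symm]
    simp only [this, h3]
  · rintro ⟨π, σ⟩ h
    rfl

theorem Wsum_block (f : Finset α → R) {V : Finset α} {a : α} (ha : a ∈ V) :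
    Wsum (fun P => if a ∈ P then f P else 0) V = f V := by
  unfold Wsum
  rw [Finset.sum_eq_single {V}]
  · simp [ha]
  · intro π hπ hne
    by_contra hcon
    apply hne
    have hall : ∀ P ∈ π, a ∈ P := by
      intro P hP
      by_contra h
      exact hcon (Finset.prod_eq_zero hP (by simp [h]))
    obtain ⟨h1, h2, h3⟩ := mem_partitionsOf.1 hπ
    rw [← h3, mem_biUnion] at ha
    obtain ⟨P, hP, haP⟩ := ha
    have hπP : π = {P} := by
      ext Q
      rw [mem_singleton]
      constructor
      · intro hQ
        by_contra hQP
        exact Finset.disjoint_left.1 (h2 Q hQ P hP hQP) (hall Q hQ) haP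
      · rintro rfl; exact hP
    rw [hπP] at h3 ⊢
    simp at h3
    rw [h3]
  · intro h
    exfalso
    apply h
    rw [mem_partitionsOf]
    refine ⟨?_, ?_, by simp⟩
    · intro P hP; rw [mem_singleton.1 hP]; exact ⟨a, ha⟩
    · intro P hP Q hQ hne
      exact absurd ((mem_singleton.1 hP).trans (mem_singleton.1 hQ).symm) hne

theorem Wsum_insert (f : Finset α → R) {S : Finset α} {a : α} (ha : a ∉ S) :
    Wsum f (insert a S) = ∑ U ∈ S.powerset, f (insert a U) * Wsum f (S \ U) := by
  have h : Wsum f (insert a S) = Wsum (fun P => (if a ∈ P then f P else 0) +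
      (if a ∉ P then f P else 0)) (insert a S) := by
    apply Wsum_congr
    intro P _ _
    by_cases h : a ∈ P <;> simp [h]
  rw [h, Wsum_add, Finset.sum_powerset_insert ha]
  rw [Finset.sum_eq_zero, zero_add]
  · refine Finset.sum_congr rfl fun U hU => ?_
    rw [Wsum_block f (mem_insert_self a U)]
    have hs : insert a S \ insert a U = S \ U := by
      ext x
      simp only [mem_sdiff, mem_insert]
      constructor
      · rintro ⟨h1, h2⟩
        push Not at h2
        exact ⟨h1.resolve_left h2.1, h2.2⟩
      · rintro ⟨h1, h2⟩
        refine ⟨Or.inr h1, ?_⟩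
        rintro (rfl | h)
        exacts [ha h1, h2 h]
    rw [hs]
    congr 1
    apply Wsum_congr
    intro P _ hP
    have : a ∉ P := fun h => ha (mem_sdiff.1 (hP h)).1
    simp [this]
  · intro U hU
    rw [mem_powerset] at hU
    have : Wsum (fun P => if a ∉ P then f P else 0) (insert a S \ U) = 0 := by
      apply Wsum_eq_zero (a := a)
      · simp only [mem_sdiff, mem_insert, true_or, true_and]
        exact fun h => ha (hU h)
      · intro P h; simp [h]
    rw [this, mul_zero]

theorem Wsum_single (x : R) (S : Finset α) :
    Wsum (fun P => if P.card = 1 then x else 0) S = x ^ S.card := by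
  induction S using Finset.induction_on with
  | empty => simp [Wsum_empty]
  | insert a S ha ih =>
    rw [Wsum_insert _ ha, Finset.sum_eq_single ∅]
    · simp only [insert_empty_eq, card_singleton, if_true, sdiff_empty, ih]
      rw [card_insert_of_notMem ha, pow_succ, mul_comm]
    · intro U hU hne
      have haU : a ∉ U := fun h => ha (mem_powerset.1 hU h)
      rw [if_neg, zero_mul]
      rw [card_insert_of_notMem haU]
      simpa using hne
    · simp
end aux

/-- coefficients of the exponential -/
noncomputable def gco (N n : ℕ) : ℝ :=
  ∑ i ∈ (Fintype.piFinset fun _ : Fin (N + 1) => Finset.range (N + 1)).filter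
          (fun i => (∀ m : Fin (N + 1), m.1 < 2 → i m = 0) ∧
            ∑ m : Fin (N + 1), m.1 * i m = n),
        ∏ m : Fin (N + 1), ((-(zetaVal m.1) / (m.1 : ℝ)) ^ i m / ((i m).factorial : ℝ))

theorem gco_zero (N : ℕ) : gco N 0 = 1 := by
  unfold gco
  rw [Finset.sum_eq_single 0]
  · simp
  · intro i hi hne
    exfalso
    apply hne
    simp only [mem_filter, Finset.sum_eq_zero_iff, mem_univ, true_implies] at hi
    funext m
    rcases Nat.mul_eq_zero.1 (hi.2.2 m) with h | h
    · exact hi.2.1 m (by omega)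
    · exact h
  · intro h
    exfalso; apply h
    simp

theorem gco_term (N : ℕ) (m : Fin (N + 1)) (hm : m.1 ≠ 0) (i i' : Fin (N + 1) → ℕ)
    (h1 : i' m = i m + 1) (h2 : ∀ x, x ≠ m → i' x = i x) :
    - zetaVal m.1 * (∏ x : Fin (N+1), (-(zetaVal x.1) / (x.1 : ℝ)) ^ i x / ((i x).factorial : ℝ)) =
      ((m.1 * i' m : ℕ) : ℝ) *
        ∏ x : Fin (N+1), (-(zetaVal x.1) / (x.1 : ℝ)) ^ i' x / ((i' x).factorial : ℝ) := by
  rw [← Finset.mul_prod_erase _ (fun x : Fin (N+1) =>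
      (-(zetaVal x.1) / (x.1 : ℝ)) ^ i x / ((i x).factorial : ℝ)) (mem_univ m),
    ← Finset.mul_prod_erase _ (fun x : Fin (N+1) =>
      (-(zetaVal x.1) / (x.1 : ℝ)) ^ i' x / ((i' x).factorial : ℝ)) (mem_univ m)]
  have : ∏ x ∈ univ.erase m, (-(zetaVal x.1) / (x.1 : ℝ)) ^ i' x / ((i' x).factorial : ℝ) =
      ∏ x ∈ univ.erase m, (-(zetaVal x.1) / (x.1 : ℝ)) ^ (i x) / ((i x).factorial : ℝ) := by
    refine Finset.prod_congr rfl fun x hx => ?_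
    rw [h2 x (mem_erase.1 hx).1]
  rw [this, h1, Nat.factorial_succ]
  have h1 : (m.1 : ℝ) ≠ 0 := by exact_mod_cast hm
  have h2 : ((i m).factorial : ℝ) ≠ 0 := by positivity
  have h3 : ((i m : ℝ) + 1) ≠ 0 := by positivity
  push_cast
  generalize (∏ x ∈ univ.erase m, (-(zetaVal x.1) / (x.1 : ℝ)) ^ (i x) / ((i x).factorial : ℝ)) = Q
  have h4 : (-(zetaVal m.1) / (m.1 : ℝ)) * (m.1 : ℝ) = - zetaVal m.1 := by field_simp
  rw [← h4, pow_succ]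
  generalize -(zetaVal m.1) / (m.1 : ℝ) = q
  field_simp

theorem gco_step (N n : ℕ) (hn : n ≤ N) (m : Fin (N + 1)) (hm : 2 ≤ m.1) (hmn : m.1 ≤ n) :
    ∑ i ∈ (Fintype.piFinset fun _ : Fin (N + 1) => Finset.range (N + 1)).filter
          (fun i => (∀ m : Fin (N + 1), m.1 < 2 → i m = 0) ∧
            ∑ m : Fin (N + 1), m.1 * i m = n),
        ((m.1 * i m : ℕ) : ℝ) * ∏ m : Fin (N + 1), ((-(zetaVal m.1) / (m.1 : ℝ)) ^ i m / ((i m).factorial : ℝ))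
      = - zetaVal m.1 * gco N (n - m.1) := by
  unfold gco
  rw [Finset.mul_sum]
  symm
  rw [← Finset.sum_filter_add_sum_filter_not _ (fun i : Fin (N+1) → ℕ => i m ≠ 0) (fun i => ((m.1 * i m : ℕ) : ℝ) * _)]
  rw [Finset.sum_eq_zero (s := Finset.filter (fun i : Fin (N+1) → ℕ => ¬ i m ≠ 0) _), add_zero]
  swap
  · intro i hi
    have : i m = 0 := by simpa using (mem_filter.1 hi).2
    simp [this]
  have hsum : ∀ i : Fin (N+1) → ℕ, ∑ x : Fin (N+1), x.1 * (i + Pi.single m 1 : Fin (N + 1) → ℕ) x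
      = ∑ x : Fin (N+1), x.1 * i x + m.1 := by
    intro i
    simp only [Pi.add_apply, mul_add, Finset.sum_add_distrib]
    congr 1
    rw [Finset.sum_eq_single m] <;> simp +contextual [Pi.single_apply]
  refine Finset.sum_bij' (fun i _ => i + Pi.single m 1) (fun i _ => i - Pi.single m 1)
    ?_ ?_ ?_ ?_ ?_
  · intro i hi
    simp only [mem_filter, Fintype.mem_piFinset, mem_range] at hi ⊢
    have hS : ∑ x : Fin (N+1), x.1 * (i + Pi.single m 1 : Fin (N + 1) → ℕ) x = n := by
      rw [hsum, hi.2.2]; omega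
    have h0 : ∀ x : Fin (N+1), x.1 < 2 → (i + Pi.single m 1 : Fin (N + 1) → ℕ) x = 0 := by
      intro x hx
      have : x ≠ m := by rintro rfl; omega
      simp [hi.2.1 x hx, Pi.single_apply, this]
    refine ⟨⟨?_, h0, hS⟩, by simp⟩
    intro x
    rcases lt_or_ge x.1 2 with hx | hx
    · rw [h0 x hx]; omega
    · have := Finset.single_le_sum (f := fun x : Fin (N+1) => x.1 * (i + Pi.single m 1 : Fin (N + 1) → ℕ) x)
        (fun _ _ => Nat.zero_le _) (mem_univ x)
      simp only [hS] at this
      nlinarith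
  · intro i hi
    simp only [mem_filter, Fintype.mem_piFinset, mem_range] at hi ⊢
    have he : i - Pi.single m 1 + Pi.single m 1 = i := by
      funext x
      by_cases hx : x = m
      · subst hx; simp; omega
      · simp [Pi.single_apply, hx]
    refine ⟨fun x => ?_, fun x hx => ?_, ?_⟩
    · have := hi.1.1 x
      simp only [Pi.sub_apply]; omega
    · simp [hi.1.2.1 x hx]
    · have := hsum (i - Pi.single m 1)
      rw [he, hi.1.2.2] at this
      omega
  · intro i hi
    simp
  · intro i hi
    simp only [mem_filter] at hi
    funext x
    by_cases hx : x = m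
    · subst hx; simp; omega
    · simp [Pi.single_apply, hx]
  · intro i hi
    exact gco_term N m (by omega) i _ (by simp) (fun x hx => by simp [hx])

theorem gco_rec (N n : ℕ) (hn : n + 1 ≤ N) :
    ((n + 1 : ℕ) : ℝ) * gco N (n + 1) =
      ∑ u ∈ Finset.range (n + 1), (if 1 ≤ u then - zetaVal (u + 1) else 0) * gco N (n - u) := by
  have h1 : ((n + 1 : ℕ) : ℝ) * gco N (n + 1) = ∑ m : Fin (N + 1),
      if 2 ≤ m.1 ∧ m.1 ≤ n + 1 then - zetaVal m.1 * gco N (n + 1 - m.1) else 0 := by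
    conv_lhs => unfold gco
    rw [Finset.mul_sum]
    rw [Finset.sum_congr rfl (g := fun i => ∑ m : Fin (N+1), ((m.1 * i m : ℕ) : ℝ) * ∏ m : Fin (N + 1), ((-(zetaVal m.1) / (m.1 : ℝ)) ^ i m / ((i m).factorial : ℝ)))]
    · rw [Finset.sum_comm]
      refine Finset.sum_congr rfl fun m _ => ?_
      split_ifs with h
      · exact gco_step N (n+1) hn m h.1 h.2
      · refine Finset.sum_eq_zero fun i hi => ?_
        simp only [mem_filter] at hi
        have : m.1 * i m = 0 := by
          rcases lt_or_ge m.1 2 with hx | hx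
          · rw [hi.2.1 m hx, mul_zero]
          · have := Finset.single_le_sum (f := fun x : Fin (N+1) => x.1 * i x)
              (fun _ _ => Nat.zero_le _) (mem_univ m)
            simp only [hi.2.2] at this
            have h' : n + 1 < m.1 := by
              by_contra hc
              exact h ⟨hx, by omega⟩
            have : i m = 0 := by
              by_contra h0
              have : 1 ≤ i m := by omega
              nlinarith
            rw [this, mul_zero]
        rw [this]; simp
    · intro i hi
      rw [← Finset.sum_mul, ← Nat.cast_sum, (mem_filter.1 hi).2.2]
  rw [h1, Fin.sum_univ_eq_sum_range (fun m => if 2 ≤ m ∧ m ≤ n + 1 then - zetaVal m * gco N (n + 1 - m) else 0)]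
  rw [Finset.sum_range_succ']
  simp only [show ¬ (2 ≤ 0 ∧ 0 ≤ n + 1) by omega, if_false, add_zero]
  symm
  rw [← Finset.sum_subset (Finset.range_subset_range.2 hn)]
  · refine Finset.sum_congr rfl fun u hu => ?_
    have := mem_range.1 hu
    by_cases hu1 : 1 ≤ u
    · rw [if_pos hu1, if_pos ⟨by omega, by omega⟩, Nat.add_sub_add_right]
    · rw [if_neg hu1, if_neg (by omega), zero_mul]
  · intro x _ hx
    rw [mem_range] at hx
    rw [if_neg (by omega)]

theorem Wsum_gco {α : Type*} [DecidableEq α] (N : ℕ) (S : Finset α) (hS : S.card ≤ N) :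
    Wsum (fun P : Finset α => if 2 ≤ P.card then
      -(((P.card - 1).factorial : ℝ) * zetaVal P.card) else 0) S = S.card.factorial * gco N S.card := by
  induction S using Finset.strongInduction with
  | H S ih =>
  rcases S.eq_empty_or_nonempty with rfl | ⟨a, ha⟩
  · simp [Wsum_empty, gco_zero]
  · obtain ⟨T, haT, rfl⟩ : ∃ T, a ∉ T ∧ insert a T = S := ⟨S.erase a, by simp, insert_erase ha⟩
    rw [Wsum_insert _ haT, card_insert_of_notMem haT]
    rw [card_insert_of_notMem haT] at hS
    rw [Nat.factorial_succ, Nat.cast_mul, mul_right_comm, gco_rec N _ hS, mul_comm, Finset.mul_sum]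
    have : ∀ U ∈ T.powerset, (if 2 ≤ (insert a U).card then
      -((((insert a U).card - 1).factorial : ℝ) * zetaVal (insert a U).card) else 0) * Wsum (fun P : Finset α => if 2 ≤ P.card then
      -(((P.card - 1).factorial : ℝ) * zetaVal P.card) else 0) (T \ U) = (fun u => (if 1 ≤ u then -((u.factorial : ℝ) * zetaVal (u+1)) else 0) * ((T.card - u).factorial * gco N (T.card - u))) U.card := by
      intro U hU
      rw [mem_powerset] at hU
      have haU : a ∉ U := fun h => haT (hU h)
      rw [ih (T \ U), card_insert_of_notMem haU, card_sdiff_of_subset hU]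
      · simp
      · refine Finset.ssubset_of_subset_of_ssubset sdiff_subset (Finset.ssubset_insert haT)
      · exact (card_le_card sdiff_subset).trans (by omega)
    rw [Finset.sum_congr rfl this, Finset.sum_powerset_apply_card (fun u => (if 1 ≤ u then -((u.factorial : ℝ) * zetaVal (u+1)) else 0) * ((T.card - u).factorial * gco N (T.card - u)))]
    refine Finset.sum_congr rfl fun u hu => ?_
    have hu' : u ≤ T.card := by have := mem_range.1 hu; omega
    have hc : ((T.card.choose u : ℝ)) * u.factorial * (T.card - u).factorial = T.card.factorial := by
      exact_mod_cast Nat.choose_mul_factorial_mul_factorial hu'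
    rw [nsmul_eq_mul, ← hc]
    split_ifs <;> ring

theorem Wsum_map {α : Type*} [DecidableEq α] {R R' : Type*} [CommRing R] [CommRing R']
    (φ : R →+* R') (f : Finset α → R) (S : Finset α) :
    Wsum (fun P => φ (f P)) S = φ (Wsum f S) := by
  simp [Wsum, map_sum, map_prod]

theorem rhoX_gco (s : ℕ) : rhoX s = (s.factorial : Polynomial ℝ) *
    ∑ j ∈ Finset.range (s + 1), Polynomial.C (gco s (s - j)) *
      (Polynomial.X ^ j * Polynomial.C ((j.factorial : ℝ)⁻¹)) := by
  unfold rhoX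
  congr 1
  refine Finset.sum_congr rfl fun j hj => ?_
  have hj' : j ≤ s := by have := mem_range.1 hj; omega
  rw [← Finset.sum_mul]
  congr 1
  unfold gco
  rw [map_sum]
  refine Finset.sum_congr ?_ fun i _ => ?_
  · ext i
    simp only [mem_filter]
    refine and_congr_right fun _ => and_congr_right fun _ => ?_
    omega
  · rw [map_prod]

theorem rhoX_card {α : Type*} [DecidableEq α] (S : Finset α) :
    rhoX S.card = Wsum (fun P : Finset α => (if P.card = 1 then (Polynomial.X : Polynomial ℝ) else 0)
      + Polynomial.C (if 2 ≤ P.card then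
      -(((P.card - 1).factorial : ℝ) * zetaVal P.card) else 0)) S := by
  rw [Wsum_add]
  have : ∀ U ∈ S.powerset, Wsum (fun P : Finset α => if P.card = 1 then (Polynomial.X : Polynomial ℝ) else 0) U
      * Wsum (fun P : Finset α => Polynomial.C (if 2 ≤ P.card then
      -(((P.card - 1).factorial : ℝ) * zetaVal P.card) else 0)) (S \ U) =
      (fun u => Polynomial.X ^ u * Polynomial.C ((S.card - u).factorial * gco S.card (S.card - u))) U.card := by
    intro U hU
    rw [mem_powerset] at hU
    rw [Wsum_single, Wsum_map, Wsum_gco S.card _ (card_le_card sdiff_subset), card_sdiff_of_subset hU]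
  rw [Finset.sum_congr rfl this, Finset.sum_powerset_apply_card (fun u => Polynomial.X ^ u * Polynomial.C ((S.card - u).factorial * gco S.card (S.card - u))), rhoX_gco, Finset.mul_sum]
  refine Finset.sum_congr rfl fun u hu => ?_
  have hu' : u ≤ S.card := by have := mem_range.1 hu; omega
  have hc : ((S.card.choose u : ℝ)) * u.factorial * (S.card - u).factorial = S.card.factorial := by
    exact_mod_cast Nat.choose_mul_factorial_mul_factorial hu'
  have hu0 : (u.factorial : ℝ) ≠ 0 := by positivity
  have h2 : (S.card.factorial : ℝ) * (u.factorial : ℝ)⁻¹ = S.card.choose u * (S.card - u).factorial := by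
    rw [← hc]; field_simp
  rw [nsmul_eq_mul, ← Polynomial.C_eq_natCast, ← Polynomial.C_eq_natCast]
  calc _ = Polynomial.X ^ u * Polynomial.C (((S.card.factorial : ℝ) * (u.factorial : ℝ)⁻¹) * gco S.card (S.card - u)) := by
        simp only [map_mul]; ring
    _ = _ := by rw [h2]; simp only [map_mul]; ring

/-- linear version of rho -/
noncomputable def rhoL : Polynomial ℝ →ₗ[ℝ] Polynomial ℝ :=
  Polynomial.lsum (fun s => LinearMap.toSpanSingleton ℝ (Polynomial ℝ) (rhoX s))

theorem rho_eq (p : Polynomial ℝ) : rho p = rhoL p := by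
  simp [rho, rhoL, Polynomial.lsum_apply, Polynomial.sum_def, Polynomial.smul_eq_C_mul]

theorem rhoL_pow (n : ℕ) (a : ℝ) : rhoL (Polynomial.X ^ n * Polynomial.C a) = rhoX n * Polynomial.C a := by
  rw [mul_comm, Polynomial.C_mul_X_pow_eq_monomial, rhoL, Polynomial.lsum_apply,
    Polynomial.sum_monomial_index]
  · simp [Polynomial.smul_eq_C_mul, mul_comm]
  · simp

/-- For any index `K = (k_1, …, k_r)` of positive integers,
`ρ̄( Σ_{Π ∈ P(r)} c̄(Π) H(K;Π;T) ) = Σ_{Π ∈ P(r)} c̄(Π) H*(K;Π;T)` in `ℝ[T]`. -/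
theorem rho_harmonic_sum_eq_shuffle_sum {r : ℕ} (k : Fin r → ℕ) (hk : ∀ i, 1 ≤ k i) :
    rho (∑ π ∈ partitionsOf (Finset.univ : Finset (Fin r)),
        (cbar π : Polynomial ℝ) * Hpoly k π) =
      ∑ π ∈ partitionsOf (Finset.univ : Finset (Fin r)),
        (cbar π : Polynomial ℝ) * Hstar k π := by
  have key : ∀ P : Finset (Fin r), P.Nonempty →
      ((∑ p ∈ P, k p = 1) = (P.card = 1 ∧ ∀ p ∈ P, k p = 1)) := by
    intro P hne
    apply propext
    have hc := hne.card_pos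
    have hle : P.card ≤ ∑ p ∈ P, k p := by
      simpa using Finset.card_nsmul_le_sum P k 1 (fun p _ => hk p)
    constructor
    · intro h
      refine ⟨by omega, fun p hp => ?_⟩
      have := Finset.single_le_sum (f := k) (fun _ _ => Nat.zero_le _) hp
      have := hk p
      omega
    · rintro ⟨h1, h2⟩
      rw [Finset.sum_congr rfl h2]; simp [h1]
  have hL : ∑ π ∈ partitionsOf (Finset.univ : Finset (Fin r)),
        (cbar π : Polynomial ℝ) * Hpoly k π = Wsum (fun P : Finset (Fin r) =>
          (if P.card = 1 ∧ ∀ p ∈ P, k p = 1 then (Polynomial.X : Polynomial ℝ) else 0) +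
          Polynomial.C (if P.card = 1 ∧ ∀ p ∈ P, k p = 1 then 0 else
            ((P.card - 1).factorial : ℝ) * zetaVal (∑ p ∈ P, k p))) univ := by
    unfold Wsum cbar Hpoly
    refine Finset.sum_congr rfl fun π hπ => ?_
    rw [Nat.cast_prod, ← Finset.prod_mul_distrib]
    refine Finset.prod_congr rfl fun P hP => ?_
    have hne := (mem_partitionsOf.1 hπ).1 P hP
    unfold Epoly
    simp only [key P hne]
    split_ifs with h
    · simp [h.1]
    · simp
  have hR : ∑ π ∈ partitionsOf (Finset.univ : Finset (Fin r)),
        (cbar π : Polynomial ℝ) * Hstar k π = Wsum (fun P : Finset (Fin r) =>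
          ((if P.card = 1 ∧ ∀ p ∈ P, k p = 1 then (Polynomial.X : Polynomial ℝ) else 0) +
            Polynomial.C (if 2 ≤ P.card ∧ ∀ p ∈ P, k p = 1 then
              -(((P.card - 1).factorial : ℝ) * zetaVal P.card) else 0)) +
          Polynomial.C (if P.card = 1 ∧ ∀ p ∈ P, k p = 1 then 0 else
            ((P.card - 1).factorial : ℝ) * zetaVal (∑ p ∈ P, k p))) univ := by
    unfold Wsum cbar Hstar
    refine Finset.sum_congr rfl fun π hπ => ?_
    rw [Nat.cast_prod, ← Finset.prod_mul_distrib]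
    refine Finset.prod_congr rfl fun P hP => ?_
    have hne := (mem_partitionsOf.1 hπ).1 P hP
    have hc := hne.card_pos
    unfold Epoly
    simp only [key P hne]
    by_cases h1 : ∀ p ∈ P, k p = 1
    · have hs : ∑ p ∈ P, k p = P.card := by
        rw [Finset.sum_congr rfl h1]; simp
      rcases Nat.lt_or_ge 1 P.card with h2 | h2
      · have h3 : P.card ≠ 1 := by omega
        have h4 : 2 ≤ P.card := h2
        simp [if_pos h1, h2, h3, h4, hs]
      · have h3 : P.card = 1 := by omega
        simp [if_pos h1, h3]
    · simp [h1]
  rw [rho_eq, hL, hR, Wsum_add, Wsum_add, map_sum]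
  refine Finset.sum_congr rfl fun U _ => ?_
  rw [Wsum_map]
  by_cases hU : ∀ p ∈ U, k p = 1
  · have e1 : Wsum (fun P : Finset (Fin r) => if P.card = 1 ∧ ∀ p ∈ P, k p = 1 then
        (Polynomial.X : Polynomial ℝ) else 0) U = Polynomial.X ^ U.card := by
      rw [← Wsum_single]
      refine Wsum_congr fun P _ hP => ?_
      have : ∀ p ∈ P, k p = 1 := fun p hp => hU p (hP hp)
      simp only [and_iff_left this]
    rw [e1, rhoL_pow, rhoX_card]
    congr 1
    refine Wsum_congr fun P _ hP => ?_
    have : ∀ p ∈ P, k p = 1 := fun p hp => hU p (hP hp)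
    simp only [and_iff_left this]
  · push Not at hU
    obtain ⟨a, haU, ha⟩ := hU
    have hz : ∀ P : Finset (Fin r), a ∈ P → ¬ ∀ p ∈ P, k p = 1 := fun P haP h => ha (h a haP)
    rw [Wsum_eq_zero haU (fun P haP => by simp only [hz P haP, and_false, if_false]),
      Wsum_eq_zero haU (fun P haP => by simp only [hz P haP, and_false, if_false, map_zero, add_zero])]
    simp
end

section
/- Let K = (k_1,…,k_r) be positive integers, not all equal to 1, and let B = {j ∈ {1,…,r} : k_j = 1}. Then in ℝ[T]: Σ_{Π ∈ P(r)} c̄(Π) · H*(K;Π;T) = Σ_{A ⊆ B} Σ_{Δ ∈ P_B({1,…,r}∖A)} c̄(Δ) · (∏_{Q ∈ Δ} ζ(Σ_{q ∈ Q} k_q)) · T^{|A|}, where the outer sum ranges over all subsets A of B (including the empty set), and each block sum Σ_{q ∈ Q} k_q is ≥ 2. -/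
open Finset

open scoped Classical

/-- `P_B(C)`: the set of partitions of `C` none of whose blocks is contained in `B`. -/
noncomputable def partitionsAvoiding {α : Type*} [DecidableEq α] (B C : Finset α) :
    Finset (Finset (Finset α)) :=
  (partitionsOf C).filter (fun Δ => ∀ Q ∈ Δ, ¬ Q ⊆ B)

theorem aux_mem {α : Type*} [DecidableEq α] (S : Finset α) (π : Finset (Finset α)) :
    π ∈ partitionsOf S ↔ (∀ P ∈ π, P.Nonempty) ∧
    (∀ P ∈ π, ∀ Q ∈ π, P ≠ Q → Disjoint P Q) ∧ (∀ x, x ∈ S ↔ ∃ P ∈ π, x ∈ P) := by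
  unfold partitionsOf
  rw [Finset.mem_filter]
  constructor
  · rintro ⟨_, h1, h2, h3⟩
    refine ⟨h1, h2, fun x => ?_⟩
    rw [← h3]; simp
  · rintro ⟨h1, h2, h3⟩
    refine ⟨?_, h1, h2, ?_⟩
    · rw [Finset.mem_powerset]
      intro P hP
      rw [Finset.mem_powerset]
      intro x hx
      exact (h3 x).2 ⟨P, hP, hx⟩
    · ext x; rw [h3]; simp

theorem aux_avoid {α : Type*} [DecidableEq α] (B S : Finset α) (π : Finset (Finset α)) :
    π ∈ partitionsAvoiding B S ↔ π ∈ partitionsOf S ∧ ∀ Q ∈ π, ¬ Q ⊆ B := by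
  unfold partitionsAvoiding
  rw [Finset.mem_filter]

theorem aux_two {r : ℕ} (k : Fin r → ℕ) (hk : ∀ i, 1 ≤ k i) (Q : Finset (Fin r))
    (h : ¬ ∀ q ∈ Q, k q = 1) : 2 ≤ ∑ q ∈ Q, k q := by
  push Not at h
  obtain ⟨q, hq, hne⟩ := h
  have h1 := Finset.single_le_sum (f := k) (fun i _ => Nat.zero_le _) hq
  have := hk q
  omega

/-- For an index `K` of positive integers, not all `1`, and `B = {j : k_j = 1}`:
`Σ_{Π ∈ P(r)} c̄(Π) H*(K;Π;T)
  = Σ_{A ⊆ B} Σ_{Δ ∈ P_B({1,…,r}∖A)} c̄(Δ) (∏_{Q ∈ Δ} ζ(Σ_{q ∈ Q} k_q)) T^{|A|}`,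
where each block sum `Σ_{q ∈ Q} k_q` is at least `2`. -/
theorem shuffle_sum_decomposition {r : ℕ} (k : Fin r → ℕ) (hk : ∀ i, 1 ≤ k i)
    (hK : ¬ ∀ i, k i = 1)
    (B : Finset (Fin r)) (hB : B = Finset.univ.filter (fun j => k j = 1)) :
    (∀ A ∈ B.powerset, ∀ Δ ∈ partitionsAvoiding B (Finset.univ \ A),
      ∀ Q ∈ Δ, 2 ≤ ∑ q ∈ Q, k q) ∧
    ∑ π ∈ partitionsOf (Finset.univ : Finset (Fin r)),
        (cbar π : Polynomial ℝ) * Hstar k π =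
      ∑ A ∈ B.powerset,
        ∑ Δ ∈ partitionsAvoiding B (Finset.univ \ A),
          (cbar Δ : Polynomial ℝ) *
            (∏ Q ∈ Δ, Polynomial.C (zetaVal (∑ q ∈ Q, k q))) *
              Polynomial.X ^ A.card := by
  have hsub : ∀ Q : Finset (Fin r), Q ⊆ B ↔ ∀ q ∈ Q, k q = 1 := by
    intro Q; subst hB; simp [Finset.subset_iff]
  have htwo : ∀ Q : Finset (Fin r), ¬ Q ⊆ B → 2 ≤ ∑ q ∈ Q, k q := by
    intro Q hQ
    rw [hsub] at hQ
    exact aux_two k hk Q hQ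
  refine ⟨?_, ?_⟩
  · intro A _ Δ hΔ Q hQ
    exact htwo Q (((aux_avoid _ _ _).1 hΔ).2 Q hQ)
  rw [Finset.sum_sigma']
  symm
  have hsing : ∀ (A : Finset (Fin r)) (P : Finset (Fin r)),
      P ∈ A.image (fun a => ({a} : Finset (Fin r))) ↔ ∃ a ∈ A, {a} = P := by
    intro A P; exact Finset.mem_image
  refine Finset.sum_of_injOn
    (fun x => x.2 ∪ x.1.image (fun a => ({a} : Finset (Fin r)))) ?_ ?_ ?_ ?_
  · rintro ⟨A, Δ⟩ h1 ⟨A', Δ'⟩ h2 he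
    simp only [Finset.coe_sigma, Set.mem_sigma_iff, Finset.mem_coe, Finset.mem_powerset,
      aux_avoid, Finset.mem_filter] at h1 h2
    obtain ⟨hA, _, hΔ⟩ := h1
    obtain ⟨hA', _, hΔ'⟩ := h2
    have he' : ∀ P, (P ∈ Δ ∨ ∃ a ∈ A, {a} = P) ↔ (P ∈ Δ' ∨ ∃ a ∈ A', {a} = P) := by
      intro P
      have := Finset.ext_iff.1 he P
      simpa only [Finset.mem_union, hsing] using this
    have e1 : A = A' := by
      ext a
      constructor
      · intro ha
        rcases (he' {a}).1 (Or.inr ⟨a, ha, rfl⟩) with h | ⟨b, hb, h⟩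
        · exact absurd (Finset.singleton_subset_iff.2 (hA ha)) (hΔ' _ h)
        · rwa [← Finset.singleton_injective h]
      · intro ha
        rcases (he' {a}).2 (Or.inr ⟨a, ha, rfl⟩) with h | ⟨b, hb, h⟩
        · exact absurd (Finset.singleton_subset_iff.2 (hA' ha)) (hΔ _ h)
        · rwa [← Finset.singleton_injective h]
    have e2 : Δ = Δ' := by
      ext P
      constructor
      · intro hP
        rcases (he' P).1 (Or.inl hP) with h | ⟨b, hb, h⟩
        · exact h
        · exact absurd (h ▸ Finset.singleton_subset_iff.2 (hA' hb)) (hΔ _ hP)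
      · intro hP
        rcases (he' P).2 (Or.inl hP) with h | ⟨b, hb, h⟩
        · exact h
        · exact absurd (h ▸ Finset.singleton_subset_iff.2 (hA hb)) (hΔ' _ hP)
    subst e1; subst e2; rfl
  · rintro ⟨A, Δ⟩ h1
    simp only [Finset.coe_sigma, Set.mem_sigma_iff, Finset.mem_coe, Finset.mem_powerset,
      aux_avoid, Finset.mem_filter, aux_mem] at h1 ⊢
    obtain ⟨hA, ⟨hn, hd, hu⟩, hΔ⟩ := h1
    simp only [Finset.mem_union, hsing]
    have hdis : ∀ P ∈ Δ, ∀ a ∈ A, a ∉ P := by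
      intro P hP a ha haP
      have := (hu a).2 ⟨P, hP, haP⟩
      simp [ha] at this
    refine ⟨?_, ?_, ?_⟩
    · rintro P (h | ⟨a, _, rfl⟩)
      · exact hn P h
      · exact Finset.singleton_nonempty a
    · rintro P (h | ⟨a, ha, rfl⟩) Q (h' | ⟨b, hb, rfl⟩) hne
      · exact hd P h Q h' hne
      · exact Finset.disjoint_singleton_right.2 (hdis P h b hb)
      · exact Finset.disjoint_singleton_left.2 (hdis Q h' a ha)
      · rw [Finset.disjoint_singleton]
        rintro rfl; exact hne rfl
    · intro x
      simp only [Finset.mem_univ, true_iff]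
      by_cases hx : x ∈ A
      · exact ⟨{x}, Or.inr ⟨x, hx, rfl⟩, Finset.mem_singleton_self x⟩
      · obtain ⟨P, hP, hxP⟩ := (hu x).1 (by simp [hx])
        exact ⟨P, Or.inl hP, hxP⟩
  · intro π hπ hnot
    rw [aux_mem] at hπ
    obtain ⟨hn, hd, hu⟩ := hπ
    by_cases hbad : ∃ P ∈ π, 1 < P.card ∧ ∀ p ∈ P, k p = 1
    · obtain ⟨P, hP, hb⟩ := hbad
      have : Hstar k π = 0 := by
        unfold Hstar
        refine Finset.prod_eq_zero hP ?_
        rw [if_pos hb, zero_mul]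
      rw [this, mul_zero]
    · exfalso
      push Not at hbad
      have hs : ∀ P ∈ π, P ⊆ B → ∃ a, P = {a} := by
        intro P hP hPB
        rw [← Finset.card_eq_one]
        have h1 := (hn P hP).card_pos
        by_contra h2
        obtain ⟨p, hp, hp'⟩ := hbad P hP (by omega)
        exact hp' ((hsub P).1 hPB p hp)
      apply hnot
      refine ⟨⟨B.filter (fun a => {a} ∈ π), π.filter (fun P => ¬ P ⊆ B)⟩, ?_, ?_⟩
      · simp only [Finset.coe_sigma, Set.mem_sigma_iff, Finset.mem_coe, Finset.mem_powerset,
          aux_avoid, Finset.mem_filter, aux_mem]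
        refine ⟨Finset.filter_subset _ _, ⟨?_, ?_, ?_⟩, ?_⟩
        · exact fun P hP => hn P hP.1
        · exact fun P hP Q hQ => hd P hP.1 Q hQ.1
        · intro x
          simp only [Finset.mem_sdiff, Finset.mem_univ, true_and, Finset.mem_filter]
          constructor
          · intro hx
            obtain ⟨P, hP, hxP⟩ := (hu x).1 (Finset.mem_univ x)
            refine ⟨P, ⟨hP, fun hPB => hx ⟨hPB hxP, ?_⟩⟩, hxP⟩
            obtain ⟨a, rfl⟩ := hs P hP hPB
            rwa [Finset.mem_singleton.1 hxP]
          · rintro ⟨P, ⟨hP, hPB⟩, hxP⟩ ⟨hxB, hxπ⟩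
            by_cases hEq : P = {x}
            · exact hPB (hEq ▸ Finset.singleton_subset_iff.2 hxB)
            · exact Finset.disjoint_left.1 (hd P hP {x} hxπ hEq) hxP
                (Finset.mem_singleton_self x)
        · exact fun P hP => hP.2
      · ext P
        simp only [Finset.mem_union, hsing, Finset.mem_filter]
        constructor
        · rintro (h | ⟨a, h, rfl⟩)
          · exact h.1
          · exact h.2
        · intro hP
          by_cases hPB : P ⊆ B
          · obtain ⟨a, rfl⟩ := hs P hP hPB
            exact Or.inr ⟨a, ⟨Finset.singleton_subset_iff.1 hPB, hP⟩, rfl⟩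
          · exact Or.inl ⟨hP, hPB⟩
  · rintro ⟨A, Δ⟩ h1
    simp only [Finset.mem_sigma, Finset.mem_powerset,
      aux_avoid, Finset.mem_filter] at h1
    obtain ⟨hA, _, hΔ⟩ := h1
    have hdisj : Disjoint Δ (A.image (fun a => ({a} : Finset (Fin r)))) := by
      rw [Finset.disjoint_left]
      intro P hP hP'
      obtain ⟨a, ha, rfl⟩ := (hsing A P).1 hP'
      exact hΔ _ hP (Finset.singleton_subset_iff.2 (hA ha))
    have hinj : Set.InjOn (fun a => ({a} : Finset (Fin r))) (A : Set (Fin r)) :=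
      fun a _ b _ h => Finset.singleton_injective h
    have hc : cbar (Δ ∪ A.image (fun a => ({a} : Finset (Fin r)))) = cbar Δ := by
      unfold cbar
      rw [Finset.prod_union hdisj, Finset.prod_image hinj]
      simp
    have hH : Hstar k (Δ ∪ A.image (fun a => ({a} : Finset (Fin r)))) =
        (∏ Q ∈ Δ, Polynomial.C (zetaVal (∑ q ∈ Q, k q))) * Polynomial.X ^ A.card := by
      unfold Hstar
      rw [Finset.prod_union hdisj, Finset.prod_image hinj]
      congr 1
      · refine Finset.prod_congr rfl fun Q hQ => ?_
        have h2 := htwo Q (hΔ Q hQ)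
        have h3 := hΔ Q hQ
        rw [hsub] at h3
        rw [if_neg (fun h => h3 h.2), one_mul, Epoly, if_neg (by omega)]
      · rw [← Finset.prod_const]
        refine Finset.prod_congr rfl fun a ha => ?_
        have : k a = 1 := by
          have := hA ha
          rw [hB] at this
          exact (Finset.mem_filter.1 this).2
        simp [Epoly, this]
    simp only [hc, hH, mul_assoc]
end
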